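/- Let ℓ ≥ 1 be an integer and let x, s ∈ [−1, 1]. Define F(s, x) = Re((x + i s √(1−x²))^{2ℓ} − (x + i s √(1−x²))^{2(ℓ+1)}). Then F(s, x) ≤ (4ℓ + 2) s² (1 − x²) + (1 − x²)(1 − s²). -/

import Mathlib

theorem abs_im_pow_le (z : ℂ) (hz : ‖z‖ ≤ 1) (n : ℕ) : |(z ^ n).im| ≤ n * |z.im| := by
  induction n with
  | zero => simp
  | succ k ih =>
    rw [pow_succ, Complex.mul_im]
    have h1 : |(z ^ k).re| ≤ 1 := by
      refine (Complex.abs_re_le_norm _).trans ?_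
      rw [norm_pow]
      exact pow_le_one₀ (norm_nonneg _) hz
    have h2 : |z.re| ≤ 1 := (Complex.abs_re_le_norm _).trans hz
    have h3 := mul_le_mul_of_nonneg_right h1 (abs_nonneg z.im)
    have h4 := mul_le_mul_of_nonneg_left h2 (abs_nonneg (z ^ k).im)
    have h5 := abs_add_le ((z ^ k).re * z.im) ((z ^ k).im * z.re)
    rw [abs_mul, abs_mul] at h5
    push_cast
    linarith

theorem re_pow_diff_aux (z : ℂ) (hz : ‖z‖ ≤ 1) (l : ℕ) :
    (z ^ (2 * l) - z ^ (2 * (l + 1))).re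
      ≤ (4 * (l : ℝ) + 2) * z.im ^ 2 + (1 - (z.re ^ 2 + z.im ^ 2)) := by
  have hn : z.re ^ 2 + z.im ^ 2 ≤ 1 := by
    have h := Complex.sq_norm z
    rw [Complex.normSq_apply] at h
    nlinarith [norm_nonneg z]
  have h1 : (z ^ (2 * l)).re ≤ 1 := by
    refine (Complex.re_le_norm _).trans ?_
    rw [norm_pow]
    exact pow_le_one₀ (norm_nonneg _) hz
  have h2 := abs_im_pow_le z hz (2 * l + 1)
  have e : (z ^ (2 * l) - z ^ (2 * (l + 1))).re
      = 2 * z.im * (z ^ (2 * l + 1)).im + (1 - (z.re ^ 2 + z.im ^ 2)) * (z ^ (2 * l)).re := by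
    have : z ^ (2 * (l + 1)) = z ^ (2 * l) * z * z := by ring
    rw [this, pow_succ]
    simp only [Complex.sub_re, Complex.mul_re, Complex.mul_im]
    ring
  rw [e]
  have h3 : z.im * (z ^ (2 * l + 1)).im ≤ (2 * l + 1) * z.im ^ 2 := by
    refine (le_abs_self _).trans ?_
    rw [abs_mul, ← sq_abs z.im]
    have := mul_le_mul_of_nonneg_left h2 (abs_nonneg z.im)
    push_cast at this
    linarith
  have h4 := mul_le_mul_of_nonneg_left h1 (sub_nonneg.2 hn)
  linarith

theorem re_pow_diff_simple_bound (ℓ : ℕ) (hℓ : 1 ≤ ℓ) (x s : ℝ)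
    (hx : x ∈ Set.Icc (-1 : ℝ) 1) (hs : s ∈ Set.Icc (-1 : ℝ) 1) :
    ((((x : ℂ) + Complex.I * (s : ℂ) * (Real.sqrt (1 - x ^ 2) : ℂ)) ^ (2 * ℓ) -
        ((x : ℂ) + Complex.I * (s : ℂ) * (Real.sqrt (1 - x ^ 2) : ℂ)) ^ (2 * (ℓ + 1))).re) ≤
      (4 * (ℓ : ℝ) + 2) * s ^ 2 * (1 - x ^ 2) + (1 - x ^ 2) * (1 - s ^ 2) := by
  have hx2 : 0 ≤ 1 - x ^ 2 := by nlinarith [hx.1, hx.2]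
  have hs2 : 0 ≤ 1 - s ^ 2 := by nlinarith [hs.1, hs.2]
  have hq := Real.sq_sqrt hx2
  set q := Real.sqrt (1 - x ^ 2)
  set z : ℂ := (x : ℂ) + Complex.I * (s : ℂ) * (q : ℂ) with hzdef
  have hre : z.re = x := by simp [hzdef]
  have him : z.im = s * q := by simp [hzdef]
  have hi2 : z.im ^ 2 = s ^ 2 * (1 - x ^ 2) := by rw [him, mul_pow, hq]
  have hz : ‖z‖ ≤ 1 := by
    have h := Complex.sq_norm z
    rw [Complex.normSq_apply] at h
    have h' : ‖z‖ ^ 2 ≤ 1 := by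
      have := mul_nonneg hx2 hs2
      rw [hre] at h
      nlinarith
    nlinarith [norm_nonneg z]
  have := re_pow_diff_aux z hz ℓ
  rw [hi2, hre] at this
  linarith
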